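/- For every unicyclic graph G on n vertices (n ≥ 3), H_A(G) ≤ (3/2)(n² − n + 2), with equality if and only if G is isomorphic to the cycle-star graph CS_{3,n−3}. -/

import Mathlib

open Finset SimpleGraph

/-- Degree of a vertex (number of neighbors). -/
noncomputable def deg {V : Type*} [Fintype V] (G : SimpleGraph V) (v : V) : ℕ :=
  Nat.card {w // G.Adj v w}

open scoped Classical in
/-- Additively weighted Harary index: sum over unordered pairs of distinct
vertices of (deg u + deg v) / d(u,v). -/
noncomputable def HA {V : Type*} [Fintype V] (G : SimpleGraph V) : ℝ :=
  (1/2) * ∑ u : V, ∑ v : V, if u = v then 0 else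
    ((deg G u + deg G v : ℕ) : ℝ) / (G.dist u v)

/-- A unicyclic graph: connected with as many edges as vertices. -/
def Unicyclic {V : Type*} [Fintype V] (G : SimpleGraph V) : Prop :=
  G.Connected ∧ Nat.card G.edgeSet = Fintype.card V

/-- k-th harmonicNum number. -/
noncomputable def harmonicNum (k : ℕ) : ℝ := ∑ i ∈ Finset.range k, (1 : ℝ) / (i + 1)

/-- CS_{3,n-3}: a triangle on vertices 0,1,2 with n-3 leaves attached to vertex 0. -/
def cycleStar3 (n : ℕ) : SimpleGraph (Fin n) :=
  SimpleGraph.fromRel (fun i j => ((i : ℕ) < 3 ∧ (j : ℕ) < 3) ∨ ((i : ℕ) = 0 ∧ 3 ≤ (j : ℕ)))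

/-- CP_{k,n-k}: cycle 0,...,k-1 with the path k,k+1,...,n-1 attached to vertex 0
(for k = n this is just the cycle C_n). -/
def cyclePath (n k : ℕ) : SimpleGraph (Fin n) :=
  SimpleGraph.fromRel (fun i j =>
    ((i : ℕ) < k ∧ (j : ℕ) < k ∧ ((j : ℕ) = (i : ℕ) + 1 ∨ ((i : ℕ) = 0 ∧ (j : ℕ) = k - 1)))
    ∨ ((i : ℕ) = 0 ∧ (j : ℕ) = k)
    ∨ (k ≤ (i : ℕ) ∧ (j : ℕ) = (i : ℕ) + 1))

/-- A vertex lies on a cycle of G. -/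
def OnCycle {V : Type*} (G : SimpleGraph V) (v : V) : Prop :=
  ∃ p : G.Walk v v, p.IsCycle

/-- Cycle-star graph: unicyclic, and every vertex of degree ≥ 2 lies on the cycle
(equivalently, every non-cycle vertex is a leaf attached to a cycle vertex). -/
def IsCycleStar {V : Type*} [Fintype V] (G : SimpleGraph V) : Prop :=
  Unicyclic G ∧ ∀ v, 2 ≤ deg G v → OnCycle G v

/-- Cycle-path graph: unicyclic, cycle vertices have degree ≤ 3 and non-cycle
vertices have degree ≤ 2 (at most one pendant path per cycle vertex). -/
def IsCyclePath {V : Type*} [Fintype V] (G : SimpleGraph V) : Prop :=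
  Unicyclic G ∧ ∀ v, (OnCycle G v → deg G v ≤ 3) ∧ (¬ OnCycle G v → deg G v ≤ 2)

/-- Length of the unique cycle of a unicyclic graph: number of vertices on a cycle. -/
noncomputable def cycleLength {V : Type*} [Fintype V] (G : SimpleGraph V) : ℕ :=
  Nat.card {v // OnCycle G v}

/-- Value of H_A(CP_{3,n-3}). -/
noncomputable def CPval (n : ℕ) : ℝ :=
  4 * ∑ i ∈ Finset.range (n - 2), harmonicNum (n - i - 2)
    + harmonicNum (n - 3) + 3 * harmonicNum (n - 2) + (6 * (n : ℝ) - 13) / ((n : ℝ) - 2)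

/-!
Collecting the terms of `HA G` by their degree gives `∑ u, deg u * ∑ v ≠ u, 1 / d(u, v)`. Each
distance is at least `2` unless `u` and `v` are adjacent, so
`HA G ≤ ((n - 1) * ∑ deg + ∑ deg²) / 2`, with equality when the diameter is at most `2`. For
unicyclic `G` this leaves `∑ deg² ≤ n² - n + 6` to be shown.

In a unicyclic graph `deg u + deg v ≤ n + 1` for `u ≠ v`: otherwise `u` and `v` have a common
neighbour, and these three vertices alone push the degree sum above `2n`. Hence
`1 ≤ deg v ≤ n + 1 - deg u` for every `v ≠ u`, and summing
`(deg v - 1) * (n + 1 - deg u - deg v) ≥ 0` over `v ≠ u` bounds `∑ deg²` in terms of `deg u` alone.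
If `deg u ≥ 3` that bound is at most `n² - n + 6`, with equality only if `u` is adjacent to all
other vertices; if there is no such `u`, all degrees are `2` and `∑ deg² = 4n ≤ n² - n + 6`, with
equality only for the triangle. A unicyclic graph with a vertex adjacent to all others is a star
plus one edge, which is the cycle-star graph.
-/

section Degree

variable {V : Type*} [Fintype V] (G : SimpleGraph V)

theorem deg_eq_degree (v : V) [Fintype (G.neighborSet v)] : deg G v = G.degree v := by
  rw [deg, ← card_neighborSet_eq_degree, ← Nat.card_eq_fintype_card]
  rfl

theorem sum_deg_eq_twice_card_edgeSet : ∑ v, deg G v = 2 * Nat.card G.edgeSet := by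
  classical
  simp_rw [deg_eq_degree, G.sum_degrees_eq_twice_card_edges, Nat.card_eq_fintype_card,
    edgeFinset_card]

variable {G}

theorem deg_add_one_le_card (v : V) : deg G v + 1 ≤ Fintype.card V := by
  classical
  rw [deg_eq_degree]
  exact G.degree_lt_card_verts v

theorem deg_add_one_eq_card_iff {v : V} : deg G v + 1 = Fintype.card V ↔ G.IsUniversal v := by
  classical
  rw [deg_eq_degree, ← degree_eq_card_sub_one]
  have := G.degree_lt_card_verts v
  lia

theorem nonempty_commonNeighbors_of_card_lt {u v : V} (h : Fintype.card V < deg G u + deg G v) :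
    (G.commonNeighbors u v).Nonempty := by
  classical
  rw [deg_eq_degree, deg_eq_degree, ← card_neighborFinset_eq_degree,
    ← card_neighborFinset_eq_degree, ← card_univ] at h
  obtain ⟨w, hw⟩ := inter_nonempty_of_card_lt_card_add_card (subset_univ _) (subset_univ _) h
  exact ⟨w, (G.mem_commonNeighbors).mpr (by simpa using hw)⟩

theorem two_le_deg_of_mem_commonNeighbors {u v w : V} (huv : u ≠ v)
    (hw : w ∈ G.commonNeighbors u v) : 2 ≤ deg G w := by
  classical
  rw [deg_eq_degree, ← card_neighborFinset_eq_degree, ← card_pair huv]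
  apply card_le_card
  simpa [insert_subset_iff, adj_comm] using G.mem_commonNeighbors.mp hw

end Degree

section Distance

variable {V : Type*} {G : SimpleGraph V}

theorem inv_dist_le [DecidableEq V] [DecidableRel G.Adj] (u v : V) :
    (G.dist u v : ℝ)⁻¹ ≤ ((if u = v then 0 else 1) + if G.Adj u v then 1 else 0) / 2 := by
  split_ifs with huv hadj hadj
  · simp [huv] at hadj
  · simp [huv]
  · simp [dist_eq_one_iff_adj.mpr hadj]
  · obtain h0 | h2 : G.dist u v = 0 ∨ 2 ≤ G.dist u v := by
      have := dist_eq_one_iff_adj.not.mpr hadj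
      lia
    · simp [h0]
    · have : (2 : ℝ) ≤ G.dist u v := mod_cast h2
      simpa using inv_anti₀ two_pos this

theorem inv_dist_eq_of_edist_le_two [DecidableEq V] [DecidableRel G.Adj] {u v : V}
    (h : G.edist u v ≤ 2) :
    (G.dist u v : ℝ)⁻¹ = ((if u = v then 0 else 1) + if G.Adj u v then 1 else 0) / 2 := by
  split_ifs with huv hadj hadj
  · simp [huv] at hadj
  · simp [huv]
  · simp [dist_eq_one_iff_adj.mpr hadj]
  · have h2 : G.edist u v = 2 := by
      have h1 : 1 < G.edist u v := by simp [← not_le, edist_le_one_iff_adj_or_eq, hadj, huv]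
      exact h.antisymm (one_add_one_eq_two (R := ℕ∞) ▸ Order.add_one_le_of_lt h1)
    simp [SimpleGraph.dist, h2]

theorem ediam_le_two_of_isUniversal {c : V} (hc : G.IsUniversal c) : G.ediam ≤ 2 :=
  (ediam_le_two_mul_eccent c).trans (mul_le_of_le_one_right' ((eccent_le_one_iff c).mpr hc))

end Distance

section Harary

variable {V : Type*} [Fintype V] (G : SimpleGraph V)

/-- The harmonic centrality of `u`, also called its reciprocal transmission: the sum of the
reciprocals of the distances from `u` to the other vertices. The vertex `u` itself, like any vertex
not reachable from `u`, contributes `0⁻¹ = 0`. -/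
noncomputable def harmonicCentrality (u : V) : ℝ := ∑ v, (G.dist u v : ℝ)⁻¹

theorem HA_eq_sum_deg_mul_harmonicCentrality :
    HA G = ∑ u, deg G u * harmonicCentrality G u := by
  classical
  have hterm (u v : V) : (if u = v then 0 else ((deg G u + deg G v : ℕ) : ℝ) / G.dist u v) =
      deg G u * (G.dist u v : ℝ)⁻¹ + deg G v * (G.dist v u : ℝ)⁻¹ := by
    split_ifs with h
    · simp [h]
    · rw [G.dist_comm (u := v)]
      push_cast
      ring
  simp_rw [HA, hterm, sum_add_distrib, harmonicCentrality, mul_sum]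
  rw [sum_comm (f := fun u v => (deg G v : ℝ) * (G.dist v u : ℝ)⁻¹)]
  ring

theorem sum_ne_add_adj [DecidableEq V] [DecidableRel G.Adj] (u : V) :
    ∑ v, ((if u = v then 0 else 1) + if G.Adj u v then 1 else 0 : ℝ) / 2 =
      (Fintype.card V - 1 + deg G u) / 2 := by
  have hne : ∑ v, (if u = v then 0 else 1 : ℝ) = Fintype.card V - 1 := by
    simp [sum_ite, filter_ne, card_erase_of_mem, Nat.cast_pred (Fintype.card_pos_iff.mpr ⟨u⟩)]
  have hadj : ∑ v, (if G.Adj u v then 1 else 0 : ℝ) = deg G u := by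
    rw [deg_eq_degree, sum_boole, ← neighborFinset_eq_filter, card_neighborFinset_eq_degree]
  rw [← sum_div, sum_add_distrib, hne, hadj]

theorem harmonicCentrality_le (u : V) :
    harmonicCentrality G u ≤ (Fintype.card V - 1 + deg G u) / 2 := by
  classical
  rw [← sum_ne_add_adj]
  exact sum_le_sum fun v _ => inv_dist_le u v

variable {G} in
theorem harmonicCentrality_eq_of_eccent_le_two {u : V} (h : G.eccent u ≤ 2) :
    harmonicCentrality G u = (Fintype.card V - 1 + deg G u) / 2 := by
  classical
  rw [← sum_ne_add_adj]
  exact sum_congr rfl fun v _ => inv_dist_eq_of_edist_le_two (edist_le_eccent.trans h)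

theorem sum_deg_mul_card_sub_one_add_deg :
    ∑ u, (deg G u : ℝ) * ((Fintype.card V - 1 + deg G u) / 2) =
      ((Fintype.card V - 1) * ∑ v, (deg G v : ℝ) + ∑ v, (deg G v : ℝ) ^ 2) / 2 := by
  rw [mul_sum, ← sum_add_distrib, sum_div]
  exact sum_congr rfl fun u _ => by ring

theorem HA_le :
    HA G ≤ ((Fintype.card V - 1) * ∑ v, (deg G v : ℝ) + ∑ v, (deg G v : ℝ) ^ 2) / 2 := by
  rw [HA_eq_sum_deg_mul_harmonicCentrality, ← sum_deg_mul_card_sub_one_add_deg]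
  gcongr with u
  exact harmonicCentrality_le G u

variable {G} in
theorem HA_eq_of_ediam_le_two (h : G.ediam ≤ 2) :
    HA G = ((Fintype.card V - 1) * ∑ v, (deg G v : ℝ) + ∑ v, (deg G v : ℝ) ^ 2) / 2 := by
  rw [HA_eq_sum_deg_mul_harmonicCentrality, ← sum_deg_mul_card_sub_one_add_deg]
  exact sum_congr rfl fun u _ => by
    rw [harmonicCentrality_eq_of_eccent_le_two (eccent_le_ediam.trans h)]

end Harary

theorem sum_sq_add_eq_of_sum_eq_two_mul_card {V R : Type*} [Fintype V] [DecidableEq V] [CommRing R]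
    {f : V → R} (hf : ∑ v, f v = 2 * Fintype.card V) (u : V) :
    ∑ v, f v ^ 2 + (Fintype.card V - 1 - f u) * (2 * f u - 5) +
        ∑ v ∈ univ.erase u, (f v - 1) * (Fintype.card V + 1 - f u - f v) =
      (Fintype.card V : R) ^ 2 - Fintype.card V + 6 := by
  have hexpand (v : V) : (f v - 1) * (Fintype.card V + 1 - f u - f v) =
      (Fintype.card V + 2 - f u) * f v - f v ^ 2 - (Fintype.card V + 1 - f u) := by ring
  rw [sum_erase_eq_sub (mem_univ u)]
  simp_rw [hexpand, sum_sub_distrib, ← mul_sum, hf, sum_const, card_univ, nsmul_eq_mul]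
  ring

namespace Unicyclic

variable {V : Type*} [Fintype V] {G : SimpleGraph V}

theorem nontrivial (hG : Unicyclic G) : Nontrivial V := by
  have := hG.1.nonempty
  by_contra! hV
  have hcard := hG.2
  rw [Subsingleton.elim G ⊥, edgeSet_bot] at hcard
  simp [eq_comm] at hcard

theorem deg_pos (hG : Unicyclic G) (v : V) : 0 < deg G v := by
  classical
  have := hG.nontrivial
  rw [deg_eq_degree]
  exact hG.1.preconnected.degree_pos_of_nontrivial v

theorem sum_deg (hG : Unicyclic G) : ∑ v, deg G v = 2 * Fintype.card V := by
  rw [sum_deg_eq_twice_card_edgeSet, hG.2]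

theorem sum_deg_sub_one (hG : Unicyclic G) : ∑ v, (deg G v - 1) = Fintype.card V := by
  rw [sum_tsub_distrib _ fun v _ => hG.deg_pos v, hG.sum_deg]
  simp [two_mul]

theorem deg_add_deg_le (hG : Unicyclic G) {u v : V} (huv : u ≠ v) :
    deg G u + deg G v ≤ Fintype.card V + 1 := by
  classical
  by_contra! h
  obtain ⟨w, hw⟩ := nonempty_commonNeighbors_of_card_lt ((Nat.lt_succ_self _).trans h)
  have hw2 := two_le_deg_of_mem_commonNeighbors huv hw
  have hsum : ∑ x ∈ {u, v, w}, (deg G x - 1) ≤ Fintype.card V :=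
    (sum_le_sum_of_subset (subset_univ _)).trans_eq hG.sum_deg_sub_one
  rw [sum_insert (by simp [huv, hw.1.ne]), sum_pair hw.2.ne] at hsum
  lia

theorem sum_deg_sq_add_le (hG : Unicyclic G) (u : V) :
    ∑ v, (deg G v : ℝ) ^ 2 + (Fintype.card V - 1 - deg G u) * (2 * deg G u - 5) ≤
      (Fintype.card V : ℝ) ^ 2 - Fintype.card V + 6 := by
  classical
  rw [← sum_sq_add_eq_of_sum_eq_two_mul_card (f := fun v => (deg G v : ℝ))
    (mod_cast hG.sum_deg) u]
  refine le_add_of_nonneg_right (sum_nonneg fun v hv => mul_nonneg ?_ ?_)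
  · exact sub_nonneg_of_le (mod_cast hG.deg_pos v)
  · have : (deg G u + deg G v : ℝ) ≤ Fintype.card V + 1 :=
      mod_cast hG.deg_add_deg_le (ne_of_mem_erase hv).symm
    linarith

theorem deg_eq_two_of_forall_deg_le_two (hG : Unicyclic G) (h : ∀ v, deg G v ≤ 2) (v : V) :
    deg G v = 2 :=
  (sum_eq_sum_iff_of_le fun v _ => h v).mp (by simp [hG.sum_deg, mul_comm]) v (mem_univ v)

theorem exists_sum_deg_sq_add_le (hG : Unicyclic G) :
    ∃ u, ∑ v, (deg G v : ℝ) ^ 2 + (Fintype.card V - 1 - deg G u) ≤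
      (Fintype.card V : ℝ) ^ 2 - Fintype.card V + 6 := by
  by_cases! h : ∃ u, 2 < deg G u
  · obtain ⟨u, hu⟩ := h
    have hu3 : (3 : ℝ) ≤ deg G u := mod_cast hu
    have hcard : (deg G u + 1 : ℝ) ≤ Fintype.card V := mod_cast deg_add_one_le_card u
    refine ⟨u, le_trans ?_ (hG.sum_deg_sq_add_le u)⟩
    gcongr
    exact le_mul_of_one_le_right (by linarith) (by linarith)
  · obtain ⟨u⟩ := hG.1.nonempty
    refine ⟨u, ?_⟩
    simp_rw [hG.deg_eq_two_of_forall_deg_le_two h, sum_const, card_univ, nsmul_eq_mul]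
    push_cast
    linarith [sq_nonneg ((Fintype.card V : ℝ) - 3)]

theorem sum_deg_sq_of_isUniversal (hG : Unicyclic G) {c : V} (hc : G.IsUniversal c) :
    ∑ v, (deg G v : ℝ) ^ 2 = (Fintype.card V : ℝ) ^ 2 - Fintype.card V + 6 := by
  classical
  have hcard : (Fintype.card V : ℝ) = deg G c + 1 := mod_cast (deg_add_one_eq_card_iff.mpr hc).symm
  have hrest : ∀ v ∈ univ.erase c,
      ((deg G v : ℝ) - 1) * (Fintype.card V + 1 - deg G c - deg G v) = 0 := by
    intro v hv
    have hle := hG.deg_add_deg_le (ne_of_mem_erase hv)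
    have hdeg : deg G v = 1 ∨ deg G v = 2 := by
      have := hG.deg_pos v
      have := deg_add_one_eq_card_iff.mpr hc
      lia
    rcases hdeg with h | h <;> rw [h, hcard] <;> ring
  rw [← sum_sq_add_eq_of_sum_eq_two_mul_card (f := fun v => (deg G v : ℝ))
    (mod_cast hG.sum_deg) c, sum_eq_zero hrest, hcard]
  ring

end Unicyclic

section StarWithEdge

variable {V W : Type*}

theorem exists_eq_sup_edge_of_card_edgeSet_eq [Finite V] {G H : SimpleGraph V} (hle : H ≤ G)
    (hcard : Nat.card G.edgeSet = Nat.card H.edgeSet + 1) :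
    ∃ a b, a ≠ b ∧ ¬H.Adj a b ∧ G = H ⊔ edge a b := by
  classical
  have := Fintype.ofFinite V
  obtain ⟨e, heG, heH⟩ := Set.exists_mem_notMem_of_ncard_lt_ncard (by
    simp only [← Nat.card_coe_set_eq]; lia : H.edgeSet.ncard < G.edgeSet.ncard)
  induction e with | _ a b
  have hsup : H ⊔ edge a b ≤ G := sup_le hle ((edge_le_iff G).mpr (.inr heG))
  have hsup_card : #(H ⊔ edge a b).edgeFinset = #G.edgeFinset := by
    rw [H.card_edgeFinset_sup_edge heH heG.ne]
    simpa [Nat.card_eq_fintype_card, edgeFinset_card] using hcard.symm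
  refine ⟨a, b, heG.ne, heH, edgeFinset_inj.mp ?_⟩
  exact (eq_of_subset_of_card_le (edgeFinset_mono hsup) hsup_card.ge).symm

theorem nonempty_iso_starGraph_sup_edge (e : V ≃ W) {c a b : V} {c' a' b' : W}
    (hca : c ≠ a) (hcb : c ≠ b) (hab : a ≠ b) (hca' : c' ≠ a') (hcb' : c' ≠ b') (hab' : a' ≠ b') :
    Nonempty (starGraph c ⊔ edge a b ≃g starGraph c' ⊔ edge a' b') := by
  obtain ⟨σ, hσ⟩ := Equiv.Perm.exists_extending_pair (e ∘ ![c, a, b]) ![c', a', b']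
    (e.injective.comp <| by simp [Function.Injective, Fin.forall_fin_succ, *, Ne.symm])
    (by simp [Function.Injective, Fin.forall_fin_succ, *, Ne.symm])
  obtain ⟨hc, ha, hb⟩ : σ (e c) = c' ∧ σ (e a) = a' ∧ σ (e b) = b' := ⟨hσ 0, hσ 1, hσ 2⟩
  refine ⟨e.trans σ, fun {x y} => ?_⟩
  simp [edge_adj, ← hc, ← ha, ← hb]

theorem cycleStar3_add_three (m : ℕ) : cycleStar3 (m + 3) = starGraph 0 ⊔ edge 1 2 := by
  ext i j
  simp only [cycleStar3, fromRel_adj, sup_adj, starGraph_adj, edge_adj, Fin.ext_iff, Fin.val_zero,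
    ne_eq, Fin.val_one, Fin.val_two]
  lia

theorem isUniversal_cycleStar3_zero (n : ℕ) [NeZero n] : (cycleStar3 n).IsUniversal 0 := by
  intro v hv
  simp only [cycleStar3, fromRel_adj, Fin.val_zero]
  lia

theorem isUniversal_symm_apply {G : SimpleGraph V} {H : SimpleGraph W} (e : G ≃g H) {w : W}
    (hw : H.IsUniversal w) : G.IsUniversal (e.symm w) := by
  intro v hv
  rw [← e.map_adj_iff, e.apply_symm_apply]
  exact hw fun h => hv (by simp [h])

end StarWithEdge

namespace Unicyclic

variable {V : Type*} [Fintype V] {G : SimpleGraph V}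

theorem exists_eq_starGraph_sup_edge (hG : Unicyclic G) {c : V} (hc : G.IsUniversal c) :
    ∃ a b, c ≠ a ∧ c ≠ b ∧ a ≠ b ∧ G = starGraph c ⊔ edge a b := by
  classical
  have hle : starGraph c ≤ G := by
    intro u v huv
    obtain ⟨hne, rfl | rfl⟩ := (starGraph_adj ..).mp huv
    · exact hc hne
    · exact (hc hne.symm).symm
  have hcard : Nat.card G.edgeSet = Nat.card (starGraph c).edgeSet + 1 := by
    rw [hG.2, ← (isTree_starGraph c).card_edgeFinset, edgeFinset_card, Nat.card_eq_fintype_card]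
  obtain ⟨a, b, hab, hnadj, rfl⟩ := exists_eq_sup_edge_of_card_edgeSet_eq hle hcard
  rw [starGraph_adj] at hnadj
  exact ⟨a, b, by grind, by grind, hab, rfl⟩

theorem exists_isUniversal_iff (hG : Unicyclic G) :
    (∃ c, G.IsUniversal c) ↔ Nonempty (G ≃g cycleStar3 (Fintype.card V)) := by
  constructor
  · rintro ⟨c, hc⟩
    obtain ⟨a, b, hca, hcb, hab, rfl⟩ := hG.exists_eq_starGraph_sup_edge hc
    obtain ⟨m, hm⟩ := Nat.exists_eq_add_of_le'
      (Fintype.two_lt_card_iff.mpr ⟨c, a, b, hca, hcb, hab⟩)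
    rw [hm, cycleStar3_add_three]
    exact nonempty_iso_starGraph_sup_edge (Fintype.equivFinOfCardEq hm) hca hcb hab
      nofun nofun nofun
  · rintro ⟨e⟩
    have := hG.1.nonempty
    exact ⟨_, isUniversal_symm_apply e (isUniversal_cycleStar3_zero _)⟩

theorem HA_le (hG : Unicyclic G) :
    HA G ≤ Fintype.card V * (Fintype.card V - 1) + (∑ v, (deg G v : ℝ) ^ 2) / 2 := by
  have hsum : ∑ v, (deg G v : ℝ) = 2 * Fintype.card V := mod_cast hG.sum_deg
  have hHA := _root_.HA_le G
  rw [hsum] at hHA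
  linarith

theorem HA_eq_of_isUniversal (hG : Unicyclic G) {c : V} (hc : G.IsUniversal c) :
    HA G = (3 / 2 : ℝ) * ((Fintype.card V : ℝ) ^ 2 - Fintype.card V + 2) := by
  have hsum : ∑ v, (deg G v : ℝ) = 2 * Fintype.card V := mod_cast hG.sum_deg
  rw [HA_eq_of_ediam_le_two (ediam_le_two_of_isUniversal hc), hG.sum_deg_sq_of_isUniversal hc, hsum]
  ring

end Unicyclic

theorem stmt7_general {V : Type*} [Fintype V] (G : SimpleGraph V) (hG : Unicyclic G) :
    HA G ≤ (3 / 2 : ℝ) * ((Fintype.card V : ℝ) ^ 2 - Fintype.card V + 2) ∧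
      (HA G = (3 / 2 : ℝ) * ((Fintype.card V : ℝ) ^ 2 - Fintype.card V + 2) ↔
        Nonempty (G ≃g cycleStar3 (Fintype.card V))) := by
  have hHA := hG.HA_le
  obtain ⟨u, hu⟩ := hG.exists_sum_deg_sq_add_le
  have hdeg : (deg G u + 1 : ℝ) ≤ Fintype.card V := mod_cast deg_add_one_le_card u
  refine ⟨by linarith, ?_⟩
  rw [← hG.exists_isUniversal_iff]
  refine ⟨fun heq => ⟨u, deg_add_one_eq_card_iff.mp ?_⟩, fun ⟨_, hc⟩ => hG.HA_eq_of_isUniversal hc⟩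
  have : (deg G u + 1 : ℝ) = Fintype.card V := by linarith
  exact mod_cast this

theorem stmt7 (n : ℕ) (hn : 3 ≤ n) (G : SimpleGraph (Fin n)) (hG : Unicyclic G) :
    HA G ≤ (3 / 2 : ℝ) * ((n : ℝ) ^ 2 - n + 2) ∧
      (HA G = (3 / 2 : ℝ) * ((n : ℝ) ^ 2 - n + 2) ↔ Nonempty (G ≃g cycleStar3 n)) := by
  have h := stmt7_general G hG
  rwa [Fintype.card_fin] at h
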